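/- Let X = ω-lim(X_k, d_k, ⋆_k) be the ultralimit of a sequence of based CAT(0) spaces with respect to a nonprincipal ultrafilter ω, and let x, y, z ∈ X with x ≠ y and x ≠ z. Let (x_k), (y_k), (z_k) be sequences representing x, y, z respectively. Then there is a sequence (x'_k) representing x with x'_k ∈ [x_k, y_k] for all k, such that for ALL sequences (y'_k) and (z'_k) representing y and z, one has ω-lim ∠_{x'_k}(y'_k, z'_k) = ∠_x(y,z). -/

import Mathlib

noncomputable section

open Metric Set Filter Real Pointwise

/-! ## Geodesics and CAT(0) spaces -/

variable {X : Type*}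

/-- A geodesic segment from `x` to `y`, parametrized by arclength on `[0, dist x y]`. -/
def IsGeodesicSegment [MetricSpace X] (f : ℝ → X) (x y : X) : Prop :=
  f 0 = x ∧ f (dist x y) = y ∧
    ∀ s ∈ Set.Icc (0:ℝ) (dist x y), ∀ t ∈ Set.Icc (0:ℝ) (dist x y),
      dist (f s) (f t) = |s - t|

/-- A geodesic metric space: every pair of points is joined by a geodesic. -/
def GeodesicSpace (X : Type*) [MetricSpace X] : Prop :=
  ∀ x y : X, ∃ f : ℝ → X, IsGeodesicSegment f x y

/-- A CAT(0) space: a geodesic space satisfying the CN-inequality of Bruhat–Tits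
(equivalent to the CAT(0) comparison inequality for complete geodesic spaces). -/
def CAT0Space (X : Type*) [MetricSpace X] : Prop :=
  GeodesicSpace X ∧
    ∀ x y z m : X, dist y m = dist y z / 2 → dist z m = dist y z / 2 →
      dist x m ^ 2 ≤ (dist x y ^ 2 + dist x z ^ 2) / 2 - dist y z ^ 2 / 4

/-- The geodesic segment `[x,y]` (as a set) in a uniquely geodesic space:
the set of points lying between `x` and `y`. -/
def geodesicSegSet [MetricSpace X] (x y : X) : Set X :=
  {z : X | dist x z + dist z y = dist x y}

/-- A complete geodesic line, parametrized by arclength. -/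
def IsGeodesicLine [MetricSpace X] (c : ℝ → X) : Prop :=
  ∀ s t : ℝ, dist (c s) (c t) = |s - t|

/-- A geodesic ray, parametrized by arclength on `[0,∞)`. -/
def IsGeodesicRay [MetricSpace X] (c : ℝ → X) : Prop :=
  ∀ s t : ℝ, 0 ≤ s → 0 ≤ t → dist (c s) (c t) = |s - t|

/-- A subset `A` is geodesic if any two of its points are joined by a geodesic inside `A`. -/
def IsGeodesicSubset [MetricSpace X] (A : Set X) : Prop :=
  ∀ x ∈ A, ∀ y ∈ A, ∃ f : ℝ → X, IsGeodesicSegment f x y ∧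
    ∀ t ∈ Set.Icc (0:ℝ) (dist x y), f t ∈ A

/-! ## Angles -/

/-- The comparison angle at `p` of the triple `(p,x,y)`: the angle at the vertex corresponding
to `p` in a Euclidean comparison triangle, computed by the law of cosines. -/
def cangle [MetricSpace X] (p x y : X) : ℝ :=
  Real.arccos ((dist p x ^ 2 + dist p y ^ 2 - dist x y ^ 2) / (2 * dist p x * dist p y))

/-- The (Alexandrov) angle at `p` between the geodesics `[p,x]` and `[p,y]`.  In a CAT(0)
space comparison angles are monotone along the geodesics, so the Alexandrov angle is the
infimum of the comparison angles over interior points of the two segments. -/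
def angle [MetricSpace X] (p x y : X) : ℝ :=
  sInf {θ : ℝ | ∃ x' ∈ geodesicSegSet p x, ∃ y' ∈ geodesicSegSet p y,
    x' ≠ p ∧ y' ≠ p ∧ θ = cangle p x' y'}

/-! ## Flats -/

/-- A `k`-flat: an isometrically embedded copy of Euclidean `k`-space. -/
def IsKFlat [MetricSpace X] (k : ℕ) (F : Set X) : Prop :=
  ∃ f : EuclideanSpace ℝ (Fin k) → X, Isometry f ∧ Set.range f = F

/-- A flat: an isometrically embedded copy of Euclidean `k`-space for some `k ≥ 2`. -/
def IsFlat [MetricSpace X] (F : Set X) : Prop := ∃ k : ℕ, 2 ≤ k ∧ IsKFlat k F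

/-- A flat is maximal if it is not contained in a finite tubular neighborhood of a
higher-dimensional flat. -/
def IsMaximalFlat [MetricSpace X] (F : Set X) : Prop :=
  IsFlat F ∧ ¬ ∃ (k k' : ℕ) (F' : Set X) (r : ℝ),
    IsKFlat k F ∧ IsKFlat k' F' ∧ k < k' ∧ F ⊆ Metric.cthickening r F'

/-! ## Geometric group actions -/

/-- A geometric action: an action by isometries that is properly discontinuous and cocompact. -/
def GeometricAction (Γ X : Type*) [Group Γ] [MetricSpace X] [MulAction Γ X] : Prop :=
  (∀ g : Γ, Isometry fun x : X => g • x) ∧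
  (∀ K L : Set X, IsCompact K → IsCompact L → {g : Γ | ((g • K) ∩ L).Nonempty}.Finite) ∧
  ∃ K : Set X, IsCompact K ∧ ⋃ g : Γ, g • K = Set.univ

/-! ## Isolated flats (IF2) -/

/-- The family `𝓕` witnesses that `X` has isolated flats (formulation (IF2)):
`𝓕` is a `Γ`-invariant family of flats, every flat of `X` lies in a uniformly bounded
tubular neighborhood of a member of `𝓕`, and `ρ`-tubular neighborhoods of distinct members
of `𝓕` have uniformly bounded overlap. -/
structure IsolatedFlatsFamily (Γ : Type*) {X : Type*} [Group Γ] [MetricSpace X]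
    [MulAction Γ X] (𝓕 : Set (Set X)) : Prop where
  flats : ∀ F ∈ 𝓕, IsFlat F
  invariant : ∀ (g : Γ), ∀ F ∈ 𝓕, g • F ∈ 𝓕
  exists_bound : ∃ D : ℝ, ∀ F : Set X, IsFlat F → ∃ F' ∈ 𝓕, F ⊆ Metric.cthickening D F'
  isolated : ∀ ρ : ℝ, ∃ κ : ℝ, ∀ F ∈ 𝓕, ∀ F' ∈ 𝓕, F ≠ F' →
    Metric.diam (Metric.cthickening ρ F ∩ Metric.cthickening ρ F') < κ

/-- `X` has isolated flats (with respect to some family). -/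
def HasIsolatedFlats (Γ X : Type*) [Group Γ] [MetricSpace X] [MulAction Γ X] : Prop :=
  ∃ 𝓕 : Set (Set X), IsolatedFlatsFamily Γ 𝓕
/-! ## The ideal boundary and the Tits metric -/

/-- The space of geodesic rays in `X`. -/
abbrev GeodesicRays (X : Type*) [MetricSpace X] := {c : ℝ → X // IsGeodesicRay c}

/-- Two rays are asymptotic if they are at bounded distance. -/
def asympSetoid (X : Type*) [MetricSpace X] : Setoid (GeodesicRays X) where
  r c c' := ∃ K : ℝ, ∀ t : ℝ, 0 ≤ t → dist (c.1 t) (c'.1 t) ≤ K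
  iseqv := by
    refine ⟨fun c => ⟨0, fun t _ => by simp⟩, ?_, ?_⟩
    · rintro c c' ⟨K, hK⟩
      exact ⟨K, fun t ht => by rw [dist_comm]; exact hK t ht⟩
    · rintro a b c ⟨K, hK⟩ ⟨K', hK'⟩
      exact ⟨K + K', fun t ht =>
        (dist_triangle _ (b.1 t) _).trans (add_le_add (hK t ht) (hK' t ht))⟩

/-- The ideal boundary of `X`: asymptoty classes of geodesic rays. -/
def IdealBoundary (X : Type*) [MetricSpace X] := Quotient (asympSetoid X)

/-- The angle at `p` between two geodesic rays `c, c'` issuing from `p`: in a CAT(0) space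
this is the infimum (= decreasing limit) of comparison angles of points along the rays. -/
def rayAngleAt [MetricSpace X] (p : X) (c c' : ℝ → X) : ℝ :=
  sInf {θ : ℝ | ∃ t > (0:ℝ), ∃ t' > (0:ℝ), θ = cangle p (c t) (c' t')}

/-- The angle `∠_p(ξ,η)` at a point `p` between two ideal boundary points, computed using
geodesic rays from `p` representing them. -/
def angleAtBetween [MetricSpace X] (p : X) (ξ η : IdealBoundary X) : ℝ :=
  sSup {θ : ℝ | ∃ c c' : GeodesicRays X, c.1 0 = p ∧ c'.1 0 = p ∧
    Quotient.mk (asympSetoid X) c = ξ ∧ Quotient.mk (asympSetoid X) c' = η ∧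
    θ = rayAngleAt p c.1 c'.1}

/-- The Tits angle metric `∠_T(ξ,η) = sup_p ∠_p(ξ,η)` on the ideal boundary. -/
def titsAngle [MetricSpace X] (ξ η : IdealBoundary X) : ℝ :=
  sSup (Set.range fun p : X => angleAtBetween p ξ η)

/-- The topology induced by the Tits angle metric on the ideal boundary.  (On a proper
CAT(0) space the Tits angle metric and the Tits length metric `Td` induce the same
topology, and the same isometry types of components consisting of spheres.) -/
def titsTopology (X : Type*) [MetricSpace X] : TopologicalSpace (IdealBoundary X) :=
  TopologicalSpace.generateFrom
    {U : Set (IdealBoundary X) | ∃ (ξ : IdealBoundary X) (ε : ℝ), U = {η | titsAngle ξ η < ε}}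

/-- A subset of the Tits boundary is a standard Euclidean sphere if it is isometric (in the
Tits metric) to the unit sphere of a Euclidean space `E^k` with its angular metric. -/
def IsStandardSphere [MetricSpace X] (C : Set (IdealBoundary X)) : Prop :=
  ∃ k : ℕ, 1 ≤ k ∧ ∃ e : IdealBoundary X → EuclideanSpace ℝ (Fin k),
    (∀ ξ ∈ C, ‖e ξ‖ = 1) ∧
    (∀ v : EuclideanSpace ℝ (Fin k), ‖v‖ = 1 → ∃ ξ ∈ C, e ξ = v) ∧
    Set.InjOn e C ∧
    ∀ ξ ∈ C, ∀ η ∈ C, titsAngle ξ η = Real.arccos (inner ℝ (e ξ) (e η) : ℝ)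

/-- Every connected component of the Tits boundary of `X` is an isolated point or a
standard Euclidean sphere. -/
def TitsBoundaryIsolatedOrSpheres (X : Type*) [MetricSpace X] : Prop :=
  ∀ ξ : IdealBoundary X,
    (@connectedComponent _ (titsTopology X) ξ = {ξ} ∧ @IsOpen _ (titsTopology X) {ξ}) ∨
    IsStandardSphere (@connectedComponent _ (titsTopology X) ξ)

/-- The trace at infinity of a subset `Y ⊆ X`: ideal points represented by rays inside `Y`. -/
def boundaryOfSet [MetricSpace X] (Y : Set X) : Set (IdealBoundary X) :=
  {ξ | ∃ c : GeodesicRays X, Quotient.mk (asympSetoid X) c = ξ ∧ ∀ t : ℝ, 0 ≤ t → c.1 t ∈ Y}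
/-! ## Ultrafilters, ultralimits, and asymptotic cones -/

/-- A nonprincipal ultrafilter on `ℕ`. -/
def IsNonprincipal (ω : Ultrafilter ℕ) : Prop := ∀ s : Set ℕ, s.Finite → s ∉ ω

/-- A real sequence that is bounded along an ultrafilter converges along that
ultrafilter to its `limUnder`. -/
theorem tendsto_limUnder_of_bdd (ω : Ultrafilter ℕ) {u : ℕ → ℝ} {C : ℝ}
    (h : ∀ᶠ n in (ω : Filter ℕ), |u n| ≤ C) :
    Filter.Tendsto u (ω : Filter ℕ) (nhds (limUnder (ω : Filter ℕ) u)) := by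
  have hC : 0 ≤ C := by
    obtain ⟨n, hn⟩ := h.exists
    exact (abs_nonneg _).trans hn
  set u' : ℕ → ℝ := fun n => max (-C) (min C (u n)) with hu'
  have hmem : ∀ n, u' n ∈ Set.Icc (-C) C := fun n =>
    ⟨le_max_left _ _, max_le (by linarith) ((min_le_left _ _))⟩
  have hle : (Ultrafilter.map u' ω : Filter ℝ) ≤ Filter.principal (Set.Icc (-C) C) := by
    rw [Filter.le_principal_iff]
    exact Filter.mem_map.2 (Filter.Eventually.of_forall fun n => hmem n)
  obtain ⟨a, -, ha⟩ := (isCompact_Icc (a := -C) (b := C)).ultrafilter_le_nhds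
    (Ultrafilter.map u' ω) hle
  have htu' : Filter.Tendsto u' (ω : Filter ℕ) (nhds a) := ha
  have heq : u' =ᶠ[(ω : Filter ℕ)] u := by
    filter_upwards [h] with n hn
    have h1 : -C ≤ u n := neg_le_of_abs_le hn
    have h2 : u n ≤ C := le_of_abs_le hn
    simp [hu', min_eq_right h2, max_eq_right h1]
  have htu : Filter.Tendsto u (ω : Filter ℕ) (nhds a) := htu'.congr' heq
  rwa [htu.limUnder_eq]

section Ultralimit

variable (Xs : ℕ → Type*) [∀ n, MetricSpace (Xs n)] (ω : Ultrafilter ℕ)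
  (b : ∀ n, Xs n) (l : ℕ → ℝ)

/-- A sequence of points `u n ∈ Xs n` whose rescaled distance to the basepoints is
bounded along `ω`. -/
structure BddSeq where
  seq : ∀ n, Xs n
  bdd : ∃ C : ℝ, ∀ᶠ n in (ω : Filter ℕ), dist (seq n) (b n) ≤ C * l n

variable (hl : ∀ᶠ n in (ω : Filter ℕ), 0 < l n)

/-- Two sequences represent the same point of the ultralimit when their rescaled
distance tends to zero along `ω`. -/
def ulimSetoid : Setoid (BddSeq Xs ω b l) where
  r u v := ∀ ε : ℝ, 0 < ε → ∀ᶠ n in (ω : Filter ℕ), dist (u.seq n) (v.seq n) ≤ ε * l n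
  iseqv := by
    refine ⟨fun u ε hε => ?_, fun {u v} h ε hε => ?_, fun {u v w} h h' ε hε => ?_⟩
    · filter_upwards [hl] with n hn
      simp [le_of_lt (mul_pos hε hn)]
    · filter_upwards [h ε hε] with n hn
      rwa [dist_comm]
    · filter_upwards [h (ε/2) (by linarith), h' (ε/2) (by linarith)] with n h1 h2
      calc dist (u.seq n) (w.seq n) ≤ dist (u.seq n) (v.seq n) + dist (v.seq n) (w.seq n) :=
            dist_triangle _ _ _
        _ ≤ ε/2 * l n + ε/2 * l n := add_le_add h1 h2
        _ = ε * l n := by ring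

/-- The ultralimit `ω-lim (Xs n, dist / l n, b n)` of a sequence of based metric spaces,
rescaled by the scaling constants `l`.  (Asymptotic cones are the special case of a
constant sequence of spaces with `l → ∞` along `ω`.) -/
def Ultralimit : Type _ := Quotient (ulimSetoid Xs ω b l hl)

variable {Xs ω b l}

theorem bddseq_dist_bdd (hl : ∀ᶠ n in (ω : Filter ℕ), 0 < l n) (x y : BddSeq Xs ω b l) :
    ∃ C : ℝ, ∀ᶠ n in (ω : Filter ℕ), |dist (x.seq n) (y.seq n) / l n| ≤ C := by
  obtain ⟨Cx, hCx⟩ := x.bdd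
  obtain ⟨Cy, hCy⟩ := y.bdd
  refine ⟨|Cx| + |Cy|, ?_⟩
  filter_upwards [hCx, hCy, hl] with n h1 h2 h3
  have hd : dist (x.seq n) (y.seq n) ≤ (|Cx| + |Cy|) * l n := by
    calc dist (x.seq n) (y.seq n) ≤ dist (x.seq n) (b n) + dist (y.seq n) (b n) :=
          dist_triangle_right _ _ _
      _ ≤ Cx * l n + Cy * l n := add_le_add h1 h2
      _ ≤ |Cx| * l n + |Cy| * l n := by
          gcongr <;> [exact le_abs_self Cx; exact le_abs_self Cy]
      _ = (|Cx| + |Cy|) * l n := by ring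
  rw [abs_div, abs_of_nonneg dist_nonneg, abs_of_pos h3, div_le_iff₀ h3]
  exact hd

variable {hl}

/-- The distance on the ultralimit: the `ω`-limit of rescaled distances. -/
def ulimDist (x y : Ultralimit Xs ω b l hl) : ℝ :=
  limUnder (ω : Filter ℕ) fun n => dist (x.out.seq n) (y.out.seq n) / l n

theorem ulimDist_tendsto (x y : Ultralimit Xs ω b l hl) :
    Filter.Tendsto (fun n => dist (x.out.seq n) (y.out.seq n) / l n) (ω : Filter ℕ)
      (nhds (ulimDist x y)) := by
  obtain ⟨C, hC⟩ := bddseq_dist_bdd hl x.out y.out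
  exact tendsto_limUnder_of_bdd ω hC

theorem ulimDist_self (x : Ultralimit Xs ω b l hl) : ulimDist x x = 0 := by
  unfold ulimDist
  have : (fun n => dist (x.out.seq n) (x.out.seq n) / l n) = fun _ => (0:ℝ) := by
    funext n; simp
  rw [this]
  exact Filter.Tendsto.limUnder_eq tendsto_const_nhds

theorem ulimDist_comm (x y : Ultralimit Xs ω b l hl) : ulimDist x y = ulimDist y x := by
  unfold ulimDist
  congr 1
  funext n
  rw [dist_comm]

theorem ulimDist_triangle (x y z : Ultralimit Xs ω b l hl) :
    ulimDist x z ≤ ulimDist x y + ulimDist y z := by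
  refine le_of_tendsto_of_tendsto (ulimDist_tendsto x z)
    ((ulimDist_tendsto x y).add (ulimDist_tendsto y z)) ?_
  filter_upwards [hl] with n hn
  rw [← add_div]
  gcongr
  exact dist_triangle _ _ _

theorem ulimDist_eq_zero {x y : Ultralimit Xs ω b l hl} (h : ulimDist x y = 0) : x = y := by
  have ht0 : Filter.Tendsto (fun n => dist (x.out.seq n) (y.out.seq n) / l n)
      (ω : Filter ℕ) (nhds 0) := h ▸ ulimDist_tendsto x y
  have hrel : (ulimSetoid Xs ω b l hl).r x.out y.out := by
    intro ε hε
    have := (Metric.tendsto_nhds.mp ht0) ε hε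
    filter_upwards [this, hl] with n h1 h2
    rw [Real.dist_eq, sub_zero, abs_div, abs_of_nonneg dist_nonneg, abs_of_pos h2,
      div_lt_iff₀ h2] at h1
    exact h1.le
  have : Quotient.mk (ulimSetoid Xs ω b l hl) x.out = Quotient.mk (ulimSetoid Xs ω b l hl) y.out :=
    Quot.sound hrel
  exact (Quotient.out_eq x).symm.trans (this.trans (Quotient.out_eq y))

/-- The ultralimit of a sequence of based metric spaces is a metric space. -/
instance ultralimitMetricSpace : MetricSpace (Ultralimit Xs ω b l hl) where
  dist := ulimDist
  dist_self := ulimDist_self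
  dist_comm := ulimDist_comm
  dist_triangle := ulimDist_triangle
  eq_of_dist_eq_zero := ulimDist_eq_zero

end Ultralimit
section Cones

variable (X : Type*) [MetricSpace X] (ω : Ultrafilter ℕ) (b : ℕ → X) (l : ℕ → ℝ)
  (hl : ∀ᶠ n in (ω : Filter ℕ), 0 < l n)

/-- The asymptotic cone `Cone_ω(X, b, l)`: the ultralimit of the based spaces
`(X, dist / l n, b n)`. -/
def AsymptoticCone : Type _ := Ultralimit (fun _ => X) ω b l hl

instance : MetricSpace (AsymptoticCone X ω b l hl) := ultralimitMetricSpace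

/-- The `ω`-limit of a sequence of subsets `A n ⊆ X` inside the asymptotic cone. -/
def ulimSet (A : ℕ → Set X) : Set (AsymptoticCone X ω b l hl) :=
  {x | ∃ u : BddSeq (fun _ => X) ω b l, Quotient.mk (ulimSetoid (fun _ => X) ω b l hl) u = x ∧
    ∀ᶠ n in (ω : Filter ℕ), u.seq n ∈ A n}

/-- The collection `𝓐_ω` of subsets of the asymptotic cone induced by a collection `𝓐`
of subsets of `X`: ultralimits of sequences in `𝓐` which stay at bounded rescaled
distance from the basepoints. -/
def coneFamily (𝓐 : Set (Set X)) : Set (Set (AsymptoticCone X ω b l hl)) :=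
  {A | ∃ An : ℕ → Set X, (∀ n, An n ∈ 𝓐) ∧
    (∃ C : ℝ, ∀ᶠ n in (ω : Filter ℕ), ∃ p ∈ An n, dist p (b n) ≤ C * l n) ∧
    A = ulimSet X ω b l hl An}

end Cones

/-! ## Tree-graded spaces and relative hyperbolicity -/

section TreeGraded

variable (Y : Type*) [MetricSpace Y]

/-- A simple geodesic triangle: a simple loop made of three geodesic segments. -/
def SimpleGeodesicTriangle (T : Set Y) : Prop :=
  ∃ (x y z : Y) (f g h : ℝ → Y),
    IsGeodesicSegment f x y ∧ IsGeodesicSegment g y z ∧ IsGeodesicSegment h z x ∧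
    T = f '' Set.Icc 0 (dist x y) ∪ g '' Set.Icc 0 (dist y z) ∪ h '' Set.Icc 0 (dist z x) ∧
    f '' Set.Icc 0 (dist x y) ∩ g '' Set.Icc 0 (dist y z) = {y} ∧
    g '' Set.Icc 0 (dist y z) ∩ h '' Set.Icc 0 (dist z x) = {z} ∧
    h '' Set.Icc 0 (dist z x) ∩ f '' Set.Icc 0 (dist x y) = {x}

/-- A complete geodesic space is tree-graded with respect to a collection `P` of closed
geodesic subsets (pieces) if distinct pieces meet in at most one point and every simple
geodesic triangle is contained in a single piece. -/
def IsTreeGraded (P : Set (Set Y)) : Prop :=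
  (∀ A ∈ P, IsClosed A ∧ IsGeodesicSubset A) ∧
  (∀ A ∈ P, ∀ B ∈ P, A ≠ B → (A ∩ B).Subsingleton) ∧
  (∀ T : Set Y, SimpleGeodesicTriangle Y T → ∃ A ∈ P, T ⊆ A)

end TreeGraded

/-- A metric space `X` is relatively hyperbolic with respect to a collection `𝓐` of
subsets if every asymptotic cone of `X` (over a nonprincipal ultrafilter, with scaling
constants tending to infinity along the ultrafilter) is tree-graded with respect to the
induced collection `𝓐_ω`. -/
def RelativelyHyperbolicSpace (X : Type*) [MetricSpace X] (𝓐 : Set (Set X)) : Prop :=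
  ∀ (ω : Ultrafilter ℕ), IsNonprincipal ω →
    ∀ (b : ℕ → X) (l : ℕ → ℝ) (hl : Filter.Tendsto l (ω : Filter ℕ) Filter.atTop),
      IsTreeGraded (AsymptoticCone X ω b l (hl.eventually (Filter.eventually_gt_atTop 0)))
        (coneFamily X ω b l (hl.eventually (Filter.eventually_gt_atTop 0)) 𝓐)
/-! ## Word metrics on groups -/

section WordMetric

variable {Γ : Type*} [Group Γ]

/-- The set of lengths of words over `S ∪ S⁻¹` representing `g`. -/
def wordLengthSet (S : Set Γ) (g : Γ) : Set ℕ :=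
  {n : ℕ | ∃ w : List Γ, w.length = n ∧ (∀ x ∈ w, x ∈ S ∨ x⁻¹ ∈ S) ∧ w.prod = g}

/-- The word length of `g` with respect to the generating set `S`. -/
def wordLength (S : Set Γ) (g : Γ) : ℕ := sInf (wordLengthSet S g)

theorem wordLengthSet_nonempty {S : Set Γ} (hS : Subgroup.closure S = ⊤) (g : Γ) :
    (wordLengthSet S g).Nonempty := by
  have hg : g ∈ Subgroup.closure S := hS ▸ Subgroup.mem_top g
  have hg' : g ∈ (Subgroup.closure S).toSubmonoid := hg
  rw [Subgroup.closure_toSubmonoid] at hg'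
  obtain ⟨w, hw, hprod⟩ := Submonoid.exists_list_of_mem_closure hg'
  refine ⟨w.length, w, rfl, fun x hx => ?_, hprod⟩
  rcases hw x hx with h | h
  · exact Or.inl h
  · exact Or.inr (Set.mem_inv.mp h)

theorem wordLength_one (S : Set Γ) : wordLength S 1 = 0 :=
  Nat.eq_zero_of_le_zero (Nat.sInf_le ⟨[], rfl, by simp, by simp⟩)

theorem wordLengthSet_inv_subset (S : Set Γ) (g : Γ) :
    wordLengthSet S g ⊆ wordLengthSet S g⁻¹ := by
  rintro n ⟨w, hlen, hmem, hprod⟩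
  refine ⟨(w.map fun x => x⁻¹).reverse, by simp [hlen], ?_, ?_⟩
  · intro x hx
    simp only [List.mem_reverse, List.mem_map] at hx
    obtain ⟨a, ha, rfl⟩ := hx
    rcases hmem a ha with h' | h'
    · exact Or.inr (by simpa using h')
    · exact Or.inl h'
  · rw [← List.prod_inv_reverse, hprod]

theorem wordLengthSet_inv (S : Set Γ) (g : Γ) :
    wordLengthSet S g⁻¹ = wordLengthSet S g := by
  refine le_antisymm ?_ (wordLengthSet_inv_subset S g)
  have := wordLengthSet_inv_subset S g⁻¹
  rwa [inv_inv] at this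

theorem wordLength_inv (S : Set Γ) (g : Γ) : wordLength S g⁻¹ = wordLength S g := by
  unfold wordLength
  rw [wordLengthSet_inv]

theorem wordLength_mul {S : Set Γ} (hS : Subgroup.closure S = ⊤) (g h : Γ) :
    wordLength S (g * h) ≤ wordLength S g + wordLength S h := by
  obtain ⟨w1, hlen1, hmem1, hprod1⟩ := Nat.sInf_mem (wordLengthSet_nonempty hS g)
  obtain ⟨w2, hlen2, hmem2, hprod2⟩ := Nat.sInf_mem (wordLengthSet_nonempty hS h)
  refine Nat.sInf_le ⟨w1 ++ w2, ?_, ?_, by simp [hprod1, hprod2]⟩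
  · rw [List.length_append, hlen1, hlen2]; rfl
  · intro x hx
    rcases List.mem_append.mp hx with h' | h'
    · exact hmem1 x h'
    · exact hmem2 x h'

/-- The word metric on a group `Γ`, with respect to a generating set `S`. -/
def wordMetricSpace (Γ : Type*) [Group Γ] (S : Set Γ)
    (hS : Subgroup.closure S = ⊤) : MetricSpace Γ where
  dist g h := (wordLength S (g⁻¹ * h) : ℝ)
  dist_self g := by simp [wordLength_one]
  dist_comm g h := by
    show (wordLength S (g⁻¹ * h) : ℝ) = (wordLength S (h⁻¹ * g) : ℝ)
    have := wordLength_inv S (g⁻¹ * h)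
    rw [mul_inv_rev, inv_inv] at this
    rw [← this]
  dist_triangle g k h := by
    show (wordLength S (g⁻¹ * h) : ℝ) ≤ (wordLength S (g⁻¹ * k) : ℝ) + (wordLength S (k⁻¹ * h) : ℝ)
    have := wordLength_mul hS (g⁻¹ * k) (k⁻¹ * h)
    have h2 : g⁻¹ * k * (k⁻¹ * h) = g⁻¹ * h := by group
    rw [h2] at this
    exact_mod_cast this
  eq_of_dist_eq_zero := by
    intro g h hd
    have hd' : (wordLength S (g⁻¹ * h) : ℝ) = 0 := hd
    have h0 : wordLength S (g⁻¹ * h) = 0 := by exact_mod_cast hd'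
    rcases (Nat.sInf_eq_zero.mp h0) with h1 | h1
    · obtain ⟨w, hlen, -, hprod⟩ := h1
      have hw : w = [] := List.length_eq_zero_iff.mp hlen
      rw [hw] at hprod
      simp only [List.prod_nil] at hprod
      exact (inv_mul_eq_one.mp hprod.symm)
    · exact absurd h1 (wordLengthSet_nonempty hS _).ne_empty

end WordMetric
/-! ## Relatively hyperbolic groups (Bowditch, via the Druţu–Sapir characterization) -/

/-- A subgroup is virtually abelian of rank at least two if it contains a finite-index
free abelian subgroup of rank at least two. -/
def IsVirtuallyAbelianOfRankAtLeastTwo {Γ : Type*} [Group Γ] (P : Subgroup Γ) : Prop :=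
  ∃ H : Subgroup Γ, H ≤ P ∧ H.relIndex P ≠ 0 ∧
    ∃ k : ℕ, 2 ≤ k ∧ Nonempty (H ≃* Multiplicative (Fin k → ℤ))

/-- A subgroup is virtually abelian if it contains an abelian subgroup of finite index. -/
def IsVirtuallyAbelian {Γ : Type*} [Group Γ] (H : Subgroup Γ) : Prop :=
  ∃ A : Subgroup Γ, A ≤ H ∧ A.relIndex H ≠ 0 ∧ ∀ a ∈ A, ∀ b ∈ A, a * b = b * a

/-- The left coset `gP` of a subgroup, as a subset of the group. -/
def leftCosetSet {Γ : Type*} [Group Γ] (g : Γ) (P : Subgroup Γ) : Set Γ :=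
  {x : Γ | ∃ p ∈ P, x = g * p}

/-- `Γ` is a relatively hyperbolic group with respect to a collection of virtually abelian
subgroups of rank at least two: equipped with a word metric, `Γ` is relatively hyperbolic
as a metric space with respect to the left cosets of the subgroups. -/
def GroupRelHypVirtAbelian (Γ : Type*) [Group Γ] : Prop :=
  ∃ (S : Finset Γ) (hS : Subgroup.closure (S : Set Γ) = ⊤) (𝓐 : Set (Subgroup Γ)),
    (∀ P ∈ 𝓐, IsVirtuallyAbelianOfRankAtLeastTwo P) ∧
    @RelativelyHyperbolicSpace Γ (wordMetricSpace Γ (S : Set Γ) hS)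
      {B : Set Γ | ∃ (g : Γ) (P : Subgroup Γ), P ∈ 𝓐 ∧ B = leftCosetSet g P}

/-- `X` is relatively hyperbolic with respect to some family of flats. -/
def RelHypWrtFlats (X : Type*) [MetricSpace X] : Prop :=
  ∃ 𝓕 : Set (Set X), (∀ F ∈ 𝓕, IsFlat F) ∧ RelativelyHyperbolicSpace X 𝓕

/-! ## The space of flats, (IF1), parallel sets -/

/-- The set of all flats in `X`. -/
abbrev Flats (X : Type*) [MetricSpace X] := {F : Set X // IsFlat F}

/-- The topology of Hausdorff convergence on bounded sets on the space of flats of `X`. -/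
def flatsTopology (X : Type*) [MetricSpace X] : TopologicalSpace (Flats X) :=
  TopologicalSpace.generateFrom
    {U : Set (Flats X) | ∃ (C₀ : Set X) (x₀ : X) (r ε : ℝ), 0 < r ∧ 0 < ε ∧
      U = {C : Flats X | EMetric.hausdorffEdist (C.1 ∩ Metric.closedBall x₀ r)
            (C₀ ∩ Metric.closedBall x₀ r) < ENNReal.ofReal ε}}

/-- Formulation (IF1) of isolated flats: there is a `Γ`-invariant family `𝓕` of flats
that is closed and isolated in the space of flats, and every flat of `X` lies in a
uniformly bounded tubular neighborhood of a member of `𝓕`. -/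
def HasIF1 (Γ X : Type*) [Group Γ] [MetricSpace X] [MulAction Γ X] : Prop :=
  ∃ 𝓕 : Set (Set X),
    (∀ F ∈ 𝓕, IsFlat F) ∧
    (∀ (g : Γ), ∀ F ∈ 𝓕, g • F ∈ 𝓕) ∧
    @IsClosed (Flats X) (flatsTopology X) {F : Flats X | F.1 ∈ 𝓕} ∧
    (∀ F : Flats X, F.1 ∈ 𝓕 → ∃ U : Set (Flats X), @IsOpen (Flats X) (flatsTopology X) U ∧
      U ∩ {F' : Flats X | F'.1 ∈ 𝓕} = {F}) ∧
    ∃ D : ℝ, ∀ F : Set X, IsFlat F → ∃ F' ∈ 𝓕, F ⊆ Metric.cthickening D F'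

/-- The parallel set of a geodesic line `c`: the union of all geodesic lines at finite
Hausdorff distance from `c`. -/
def parallelSet {X : Type*} [MetricSpace X] (c : ℝ → X) : Set X :=
  {x : X | ∃ c' : ℝ → X, IsGeodesicLine c' ∧
    EMetric.hausdorffEdist (Set.range c) (Set.range c') ≠ ⊤ ∧ x ∈ Set.range c'}

/-- `X` has thin parallel sets: the parallel set of every geodesic line in a maximal flat
`F` lies in a finite tubular neighborhood of `F`. -/
def HasThinParallelSets (X : Type*) [MetricSpace X] : Prop :=
  ∀ c : ℝ → X, IsGeodesicLine c → ∀ F : Set X, IsMaximalFlat F → Set.range c ⊆ F →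
    ∃ r : ℝ, parallelSet c ⊆ Metric.cthickening r F

/-- `X` has uniformly thin parallel sets: thin parallel sets with a uniform bound on the
thickness of the tubular neighborhoods. -/
def HasUniformlyThinParallelSets (X : Type*) [MetricSpace X] : Prop :=
  ∃ r : ℝ, ∀ c : ℝ → X, IsGeodesicLine c → ∀ F : Set X, IsMaximalFlat F → Set.range c ⊆ F →
    parallelSet c ⊆ Metric.cthickening r F

/-- `X` has slim parallel sets: the Tits boundary of the parallel set of every geodesic
line in a maximal flat `F` equals the Tits boundary of `F`. -/
def HasSlimParallelSets (X : Type*) [MetricSpace X] : Prop :=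
  ∀ c : ℝ → X, IsGeodesicLine c → ∀ F : Set X, IsMaximalFlat F → Set.range c ⊆ F →
    boundaryOfSet (parallelSet c) = boundaryOfSet F

/-! ## Quasi-isometric embeddings, quasigeodesics, fellow travelling -/

/-- An `(L,C)`-quasi-isometric embedding. -/
def QIEmbedding {Y X : Type*} [MetricSpace Y] [MetricSpace X] (L C : ℝ) (f : Y → X) : Prop :=
  ∀ y y' : Y, (1/L) * dist y y' - C ≤ dist (f y) (f y') ∧
    dist (f y) (f y') ≤ L * dist y y' + C

/-- A `(λ,ε)`-quasigeodesic, defined on the interval `[0,a]`. -/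
def Quasigeodesic {X : Type*} [MetricSpace X] (lam eps : ℝ) (α : ℝ → X) (a : ℝ) : Prop :=
  ∀ s ∈ Set.Icc (0:ℝ) a, ∀ t ∈ Set.Icc (0:ℝ) a,
    (1/lam) * |s - t| - eps ≤ dist (α s) (α t) ∧ dist (α s) (α t) ≤ lam * |s - t| + eps

/-- Two paths `α : [0,a] → X` and `α' : [0,a'] → X` `L`-fellow travel relative to a
sequence of flats. -/
def FellowTravelRelFlats {X : Type*} [MetricSpace X] (L : ℝ) (α α' : ℝ → X)
    (a a' : ℝ) : Prop :=
  ∃ (n : ℕ) (Fs : Fin n → Set X), (∀ i, IsFlat (Fs i)) ∧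
  ∃ t s t' s' : Fin (n+1) → ℝ,
    t 0 = 0 ∧ s (Fin.last n) = a ∧ t' 0 = 0 ∧ s' (Fin.last n) = a' ∧
    (∀ i : Fin (n+1), t i ≤ s i) ∧ (∀ i : Fin n, s i.castSucc ≤ t i.succ) ∧
    (∀ i : Fin (n+1), t' i ≤ s' i) ∧ (∀ i : Fin n, s' i.castSucc ≤ t' i.succ) ∧
    (∀ i : Fin (n+1),
      Metric.hausdorffDist (α '' Set.Icc (t i) (s i)) (α' '' Set.Icc (t' i) (s' i)) ≤ L) ∧
    (∀ i : Fin n,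
      α '' Set.Icc (s i.castSucc) (t i.succ) ⊆ Metric.cthickening L (Fs i) ∧
      α' '' Set.Icc (s' i.castSucc) (t' i.succ) ⊆ Metric.cthickening L (Fs i))

/-! ## Quasiconvex and undistorted subgroups -/

/-- A quasiconvex subset of a geodesic space: all geodesics between its points stay in a
bounded neighborhood of it. -/
def QuasiconvexSubset {X : Type*} [MetricSpace X] (Y : Set X) : Prop :=
  ∃ κ : ℝ, ∀ x ∈ Y, ∀ y ∈ Y, ∀ f : ℝ → X, IsGeodesicSegment f x y →
    ∀ t ∈ Set.Icc (0:ℝ) (dist x y), f t ∈ Metric.cthickening κ Y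

/-- The orbit of a point under a subgroup. -/
def orbitSet {Γ X : Type*} [Group Γ] [MulAction Γ X] (H : Subgroup Γ) (x₀ : X) : Set X :=
  {x : X | ∃ h ∈ H, x = h • x₀}

/-- A subgroup `H ≤ Γ` is undistorted: the inclusion is a quasi-isometric embedding with
respect to word metrics. -/
def UndistortedSubgroup {Γ : Type*} [Group Γ] (H : Subgroup Γ) : Prop :=
  ∃ (S : Finset Γ) (T : Finset H),
    Subgroup.closure (S : Set Γ) = ⊤ ∧ Subgroup.closure (T : Set H) = ⊤ ∧
    ∃ L C : ℝ, 0 < L ∧ 0 ≤ C ∧ ∀ h h' : H,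
      (1/L) * (wordLength ((T : Set H)) (h⁻¹ * h') : ℝ) - C ≤
          (wordLength ((S : Set Γ)) ((h : Γ)⁻¹ * (h' : Γ)) : ℝ) ∧
        (wordLength ((S : Set Γ)) ((h : Γ)⁻¹ * (h' : Γ)) : ℝ) ≤
          L * (wordLength ((T : Set H)) (h⁻¹ * h') : ℝ) + C
/-! ## Biautomatic groups -/

section Biautomatic

variable {Γ : Type*} [Group Γ]

/-- The group element represented by a word in the generators. -/
def wordProd {A : Finset Γ} (w : List {x : Γ // x ∈ A}) : Γ :=
  (w.map Subtype.val).prod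

/-- The path in `Γ` traced out by a word: at time `n` it is at the product of the first
`n` letters. -/
def wordPath {A : Finset Γ} (w : List {x : Γ // x ∈ A}) (n : ℕ) : Γ :=
  ((w.map Subtype.val).take n).prod

/-- A group is biautomatic if it admits a finite generating set `A` and a regular
language `L` over `A` surjecting onto the group, whose paths satisfy the two-sided
`k`-fellow traveller property. -/
def Biautomatic (Γ : Type*) [Group Γ] : Prop :=
  ∃ A : Finset Γ, Subgroup.closure (A : Set Γ) = ⊤ ∧
    ∃ L : Language {x : Γ // x ∈ A}, L.IsRegular ∧
      (∀ g : Γ, ∃ w ∈ L, wordProd w = g) ∧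
      ∃ k : ℕ, ∀ (a : {x : Γ // x ∈ A}) (u v : List {x : Γ // x ∈ A}),
        u ∈ L → v ∈ L →
        (wordProd u = wordProd v * a.1 →
          ∀ n : ℕ, wordLength (A : Set Γ) ((wordPath u n)⁻¹ * wordPath v n) ≤ k) ∧
        (wordProd u = a.1 * wordProd v →
          ∀ n : ℕ, wordLength (A : Set Γ) ((wordPath u n)⁻¹ * (a.1 * wordPath v n)) ≤ k)

end Biautomatic

/-! ## The cone topology on the ideal boundary, and the boundary action -/

/-- The topology of uniform convergence on compact sets on the space of geodesic rays
(since rays are `1`-Lipschitz this coincides with the topology of pointwise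
convergence). -/
def raysTopology (X : Type*) [MetricSpace X] : TopologicalSpace (GeodesicRays X) :=
  TopologicalSpace.induced (fun c : GeodesicRays X => (c.1 : ℝ → X)) Pi.topologicalSpace

/-- The cone topology on the ideal boundary of a proper CAT(0) space: the quotient of the
topology of uniform convergence on compact sets on the space of geodesic rays. -/
def coneTopologyBoundary (X : Type*) [MetricSpace X] : TopologicalSpace (IdealBoundary X) :=
  TopologicalSpace.coinduced (Quotient.mk (asympSetoid X)) (raysTopology X)

/-- The induced action of an isometric group action on the ideal boundary. -/
def boundarySMul {Γ X : Type*} [Group Γ] [MetricSpace X] [MulAction Γ X]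
    (hiso : ∀ g : Γ, Isometry fun x : X => g • x) (g : Γ) :
    IdealBoundary X → IdealBoundary X :=
  Quotient.lift
    (fun c : GeodesicRays X => Quotient.mk (asympSetoid X)
      (⟨fun t => g • c.1 t, fun s t hs ht => by
        simpa using (hiso g).dist_eq (c.1 s) (c.1 t) ▸ c.2 s t hs ht⟩ : GeodesicRays X))
    (by
      rintro c c' ⟨K, hK⟩
      apply Quot.sound
      exact ⟨K, fun t ht => by
        simpa using ((hiso g).dist_eq (c.1 t) (c'.1 t)) ▸ hK t ht⟩)

/-! ## Flat half-planes and flat sectors -/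

/-- A flat half-plane meeting `F` orthogonally: an isometrically embedded Euclidean
half-plane whose boundary line lies in `F` and which leaves `F` at angle `π/2`. -/
def FlatHalfPlaneOrthogonal {Y : Type*} [MetricSpace Y] (F : Set Y) : Prop :=
  ∃ h : {v : EuclideanSpace ℝ (Fin 2) // 0 ≤ v 1} → Y,
    Isometry h ∧
    (∀ v : {v : EuclideanSpace ℝ (Fin 2) // 0 ≤ v 1}, v.1 1 = 0 → h v ∈ F) ∧
    ∀ (v : {v : EuclideanSpace ℝ (Fin 2) // 0 ≤ v 1}) (hv : v.1 1 = 0),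
      ∀ y ∈ F, y ≠ h v → ∀ t : ℝ, ∀ ht : 0 < t,
        angle (h v) (h ⟨(v.1 + EuclideanSpace.single 1 t : EuclideanSpace ℝ (Fin 2)), by
          have h1 : (v.1 + EuclideanSpace.single 1 t : EuclideanSpace ℝ (Fin 2)) 1
              = v.1 1 + t := by
            simp [EuclideanSpace.single_apply]
          rw [h1, hv, zero_add]; exact ht.le⟩) y = π / 2

/-- The model Euclidean sector of angle `θ`: the convex region of `E²` bounded by two rays
from the origin making angle `θ`. -/
def modelSector (θ : ℝ) : Set (EuclideanSpace ℝ (Fin 2)) :=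
  {v | ∃ r φ : ℝ, 0 ≤ r ∧ 0 ≤ φ ∧ φ ≤ θ ∧ v 0 = r * Real.cos φ ∧ v 1 = r * Real.sin φ}

/-- A flat sector of angle `θ` in `X`: an isometrically embedded copy of the model
Euclidean sector of angle `θ`. -/
def IsFlatSector {X : Type*} [MetricSpace X] (θ : ℝ) (S : Set X) : Prop :=
  ∃ f : {v : EuclideanSpace ℝ (Fin 2) // v ∈ modelSector θ} → X,
    Isometry f ∧ Set.range f = S

/-! ## The space of directions at a point -/

section Directions

variable {Y : Type*} [MetricSpace Y]

/-- Two points determine the same direction at `p` when the angle at `p` between them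
vanishes.  (In a CAT(0) space this relation is already an equivalence relation; we take
the generated equivalence relation.) -/
def dirSetoid (p : Y) : Setoid {z : Y // z ≠ p} :=
  Relation.EqvGen.setoid (fun q q' => angle p q.1 q'.1 = 0)

/-- The space of directions at `p`: germs at `p` of geodesics emanating from `p`. -/
def SpaceOfDirections (p : Y) := Quotient (dirSetoid p)

/-- The direction at `p` pointing towards `y`. -/
def dirOf (p : Y) (y : Y) (h : y ≠ p) : SpaceOfDirections p :=
  Quotient.mk (dirSetoid p) ⟨y, h⟩

/-- The angle between two directions at `p`. -/
def dirAngle {p : Y} (d d' : SpaceOfDirections p) : ℝ :=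
  angle p d.out.1 d'.out.1

/-- The topology on the space of directions induced by the angle metric. -/
def dirTopology (p : Y) : TopologicalSpace (SpaceOfDirections p) :=
  TopologicalSpace.generateFrom
    {U | ∃ (d : SpaceOfDirections p) (ε : ℝ), U = {d' | dirAngle d d' < ε}}

/-- `Σ_p F`: the set of directions at `p` pointing into a subset `F`. -/
def dirSet (p : Y) (F : Set Y) : Set (SpaceOfDirections p) :=
  {d | ∃ (q : Y) (hq : q ≠ p), q ∈ F ∧ dirOf p q hq = d}

end Directions

theorem ua_exists_pt [MetricSpace X] (hX : GeodesicSpace X) (p x : X) (r : ℝ) (h0 : 0 ≤ r)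
    (h1 : r ≤ dist p x) : ∃ m : X, dist p m = r ∧ dist m x = dist p x - r := by
  obtain ⟨f, hf0, hf1, hf⟩ := hX p x
  refine ⟨f r, ?_, ?_⟩
  · have := hf 0 ⟨le_refl _, dist_nonneg⟩ r ⟨h0, h1⟩
    rw [hf0] at this
    rw [this, zero_sub, abs_neg, abs_of_nonneg h0]
  · have := hf r ⟨h0, h1⟩ (dist p x) ⟨dist_nonneg, le_refl _⟩
    rw [hf1] at this
    rw [this, abs_sub_comm, abs_of_nonneg (by linarith)]

theorem ua_cn_geod [MetricSpace X] (hX : CAT0Space X) (p x : X) (f : ℝ → X)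
    (hf : IsGeodesicSegment f p x) (z : X) (s : ℝ) (hs : s ∈ Set.Icc (0:ℝ) 1) :
    dist z (f (s * dist p x)) ^ 2 ≤
      (1 - s) * dist z p ^ 2 + s * dist z x ^ 2 - s * (1 - s) * dist p x ^ 2 := by
  obtain ⟨hf0, hf1, hf⟩ := hf
  set a := dist p x with ha
  have ha0 : 0 ≤ a := dist_nonneg
  have hmem : ∀ s ∈ Set.Icc (0:ℝ) 1, s * a ∈ Set.Icc (0:ℝ) a := fun s hs =>
    ⟨mul_nonneg hs.1 ha0, by nlinarith [hs.2]⟩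
  have hfd : ∀ s ∈ Set.Icc (0:ℝ) 1, ∀ t ∈ Set.Icc (0:ℝ) 1,
      dist (f (s * a)) (f (t * a)) = |s - t| * a := by
    intro s hs t ht
    rw [hf _ (hmem s hs) _ (hmem t ht), ← sub_mul, abs_mul, abs_of_nonneg ha0]
  set h : ℝ → ℝ := fun s => dist z (f (s * a)) ^ 2 -
    ((1 - s) * dist z p ^ 2 + s * dist z x ^ 2 - s * (1 - s) * a ^ 2) with hh
  have h0 : h 0 = 0 := by simp [hh, hf0]
  have h1 : h 1 = 0 := by simp [hh, hf1]
  have hmid : ∀ u ∈ Set.Icc (0:ℝ) 1, ∀ v ∈ Set.Icc (0:ℝ) 1, h ((u + v) / 2) ≤ (h u + h v) / 2 := by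
    intro u hu v hv
    have hm : (u + v) / 2 ∈ Set.Icc (0:ℝ) 1 := ⟨by linarith [hu.1, hv.1], by linarith [hu.2, hv.2]⟩
    have e := hfd u hu v hv
    have e1 : dist (f (u * a)) (f ((u + v) / 2 * a)) = dist (f (u * a)) (f (v * a)) / 2 := by
      rw [hfd u hu _ hm, e, show u - (u + v) / 2 = (u - v) / 2 by ring, abs_div, abs_two]; ring
    have e2 : dist (f (v * a)) (f ((u + v) / 2 * a)) = dist (f (u * a)) (f (v * a)) / 2 := by
      rw [hfd v hv _ hm, e, show v - (u + v) / 2 = -((u - v) / 2) by ring, abs_neg, abs_div,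
        abs_two]; ring
    have := hX.2 z _ _ _ e1 e2
    have e3 : dist (f (u * a)) (f (v * a)) ^ 2 = (u - v) ^ 2 * a ^ 2 := by
      rw [e, mul_pow, sq_abs]
    rw [e3] at this
    simp only [hh]
    nlinarith [this]
  have hcont : ContinuousOn h (Set.Icc 0 1) := by
    have hc : ContinuousOn (fun s : ℝ => f (s * a)) (Set.Icc 0 1) := by
      apply LipschitzOnWith.continuousOn (K := ⟨a, ha0⟩)
      apply LipschitzOnWith.of_dist_le_mul
      intro s hs t ht
      rw [hfd s hs t ht, Real.dist_eq]
      exact le_of_eq (mul_comm _ _)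
    have : ContinuousOn (fun s : ℝ => dist z (f (s * a))) (Set.Icc 0 1) :=
      (continuous_const.dist continuous_id).comp_continuousOn hc
    simp only [hh]
    fun_prop
  obtain ⟨s0, hs0, hmax⟩ := isCompact_Icc.exists_isMaxOn (Set.nonempty_Icc.2 zero_le_one) hcont
  have hM : h s0 ≤ 0 := by
    rcases le_total s0 (1/2) with hle | hle
    · have m2 : 2 * s0 ∈ Set.Icc (0:ℝ) 1 := ⟨by linarith [hs0.1], by linarith⟩
      have := hmid 0 ⟨le_refl _, zero_le_one⟩ (2 * s0) m2
      rw [show (0 + 2 * s0) / 2 = s0 by ring, h0] at this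
      have : h (2 * s0) ≤ h s0 := hmax m2
      linarith
    · have m2 : 2 * s0 - 1 ∈ Set.Icc (0:ℝ) 1 := ⟨by linarith, by linarith [hs0.2]⟩
      have := hmid 1 ⟨zero_le_one, le_refl _⟩ (2 * s0 - 1) m2
      rw [show (1 + (2 * s0 - 1)) / 2 = s0 by ring, h1] at this
      have : h (2 * s0 - 1) ≤ h s0 := hmax m2
      linarith
  have : h s ≤ h s0 := hmax hs
  have h2 : h s ≤ 0 := this.trans hM
  simp only [hh] at h2
  linarith

theorem ua_cn_seg [MetricSpace X] (hX : CAT0Space X) (p x m : X) (z : X) (s : ℝ)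
    (hs : s ∈ Set.Icc (0:ℝ) 1) (h1 : dist p m = s * dist p x)
    (h2 : dist m x = (1 - s) * dist p x) :
    dist z m ^ 2 ≤
      (1 - s) * dist z p ^ 2 + s * dist z x ^ 2 - s * (1 - s) * dist p x ^ 2 := by
  obtain ⟨f, hf⟩ := hX.1 p x
  have h3 := ua_cn_geod hX p x f hf m s hs
  rw [dist_comm m p, h1, h2] at h3
  have h4 : dist m (f (s * dist p x)) ^ 2 ≤ 0 := by nlinarith
  have h5 : dist m (f (s * dist p x)) = 0 := by
    have := sq_nonneg (dist m (f (s * dist p x)))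
    exact pow_eq_zero_iff (two_ne_zero) |>.1 (le_antisymm h4 this)
  rw [dist_eq_zero.1 h5]
  exact ua_cn_geod hX p x f hf z s hs

theorem ua_cangle_comm [MetricSpace X] (p x y : X) : cangle p x y = cangle p y x := by
  unfold cangle
  rw [dist_comm x y]
  congr 1
  ring

theorem ua_cangle_nonneg [MetricSpace X] (p x y : X) : 0 ≤ cangle p x y := arccos_nonneg _

theorem ua_cangle_mono1 [MetricSpace X] (hX : CAT0Space X) (p x y x' : X)
    (hx' : x' ∈ geodesicSegSet p x) (hp : x' ≠ p) (hy : y ≠ p) :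
    cangle p x' y ≤ cangle p x y := by
  have hx'0 : 0 < dist p x' := dist_pos.2 hp.symm
  have hy0 : 0 < dist p y := dist_pos.2 hy.symm
  have e : dist p x' + dist x' x = dist p x := hx'
  have hx0 : 0 < dist p x := by linarith [dist_nonneg (x := x') (y := x)]
  set s := dist p x' / dist p x with hs
  have e1 : dist p x' = s * dist p x := by rw [hs]; field_simp
  have hs0 : 0 < s := div_pos hx'0 hx0
  have hs1 : s ≤ 1 := by rw [hs, div_le_one hx0]; linarith [dist_nonneg (x := x') (y := x)]
  have := ua_cn_seg hX p x x' y s ⟨hs0.le, hs1⟩ e1 (by linarith)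
  unfold cangle
  apply arccos_le_arccos
  rw [e1, div_le_div_iff₀ (by positivity) (by positivity), dist_comm x' y, dist_comm p y,
    dist_comm x y]
  have hy0' : 0 < dist y p := by rw [dist_comm]; exact hy0
  have key : s * (dist p x ^ 2 + dist y p ^ 2 - dist y x ^ 2) ≤
      (s * dist p x) ^ 2 + dist y p ^ 2 - dist y x' ^ 2 := by nlinarith
  have := mul_le_mul_of_nonneg_right key (show 0 ≤ 2 * dist p x * dist y p by positivity)
  nlinarith

theorem ua_cangle_mono [MetricSpace X] (hX : CAT0Space X) (p x y x' y' : X)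
    (hx' : x' ∈ geodesicSegSet p x) (hp : x' ≠ p) (hy' : y' ∈ geodesicSegSet p y) (hpy : y' ≠ p) :
    cangle p x' y' ≤ cangle p x y := by
  have hy : y ≠ p := by
    rintro rfl
    have e : dist y y' + dist y' y = dist y y := hy'
    rw [dist_self, dist_comm y' y] at e
    exact hpy (dist_eq_zero.1 (show dist y y' = 0 by linarith)).symm
  have h1 := ua_cangle_mono1 hX p x y x' hx' hp hy
  have h2 := ua_cangle_mono1 hX p y x' y' hy' hpy hp
  rw [ua_cangle_comm p y x', ua_cangle_comm p y' x'] at h2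
  exact h2.trans h1

theorem ua_cangle_le [MetricSpace X] (p x y : X) (hx : x ≠ p) (hy : y ≠ p) (θ : ℝ) (h0 : 0 ≤ θ)
    (h1 : θ ≤ π)
    (h : dist x y ^ 2 ≤ dist p x ^ 2 + dist p y ^ 2 - 2 * dist p x * dist p y * cos θ) :
    cangle p x y ≤ θ := by
  have hx0 : 0 < dist p x := dist_pos.2 hx.symm
  have hy0 : 0 < dist p y := dist_pos.2 hy.symm
  rw [← arccos_cos h0 h1]
  apply arccos_le_arccos
  rw [le_div_iff₀ (by positivity)]
  linarith

theorem ua_dist_le [MetricSpace X] (p x y : X) (hx : x ≠ p) (hy : y ≠ p) (θ : ℝ)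
    (h1 : θ ≤ π) (h : cangle p x y ≤ θ) :
    dist x y ^ 2 ≤ dist p x ^ 2 + dist p y ^ 2 - 2 * dist p x * dist p y * cos θ := by
  have hx0 : 0 < dist p x := dist_pos.2 hx.symm
  have hy0 : 0 < dist p y := dist_pos.2 hy.symm
  have t1 := dist_triangle_left x y p
  have t2 := dist_triangle p x y
  have t3 := dist_triangle p y x
  rw [dist_comm y x] at t3
  have hd := dist_nonneg (x := x) (y := y)
  have hc := cos_le_cos_of_nonneg_of_le_pi (arccos_nonneg _) h1 h
  rw [cos_arccos, le_div_iff₀ (by positivity)] at hc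
  · linarith
  · rw [le_div_iff₀ (by positivity)]; nlinarith
  · rw [div_le_iff₀ (by positivity)]
    nlinarith [mul_nonneg (sub_nonneg.2 t2) (sub_nonneg.2 t3)]

theorem ua_angle_le [MetricSpace X] (p x y x' y' : X) 
    (hx' : x' ∈ geodesicSegSet p x) (hp : x' ≠ p) (hy' : y' ∈ geodesicSegSet p y) (hpy : y' ≠ p) :
    angle p x y ≤ cangle p x' y' :=
  csInf_le ⟨0, by rintro _ ⟨_, _, _, _, _, _, rfl⟩; exact arccos_nonneg _⟩
    ⟨x', hx', y', hy', hp, hpy, rfl⟩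

theorem ua_right_mem [MetricSpace X] (p x : X) : x ∈ geodesicSegSet p x := by
  simp [geodesicSegSet]

theorem ua_angle_le_cangle [MetricSpace X] (p x y : X) (hp : x ≠ p) (hpy : y ≠ p) :
    angle p x y ≤ cangle p x y :=
  ua_angle_le p x y x y (ua_right_mem _ _) hp (ua_right_mem _ _) hpy

theorem ua_exists_lt [MetricSpace X] (p x y : X) (hp : x ≠ p) (hpy : y ≠ p) (c : ℝ)
    (h : angle p x y < c) : ∃ x' ∈ geodesicSegSet p x, ∃ y' ∈ geodesicSegSet p y,
      x' ≠ p ∧ y' ≠ p ∧ cangle p x' y' < c := by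
  unfold angle at h
  obtain ⟨θ, ⟨x', h1, y', h2, h3, h4, rfl⟩, h5⟩ := exists_lt_of_csInf_lt
    (by exact ⟨_, x, ua_right_mem _ _, y, ua_right_mem _ _, hp, hpy, rfl⟩) h
  exact ⟨x', h1, y', h2, h3, h4, h5⟩

theorem ua_angle_comm [MetricSpace X] (p x y : X) : angle p x y = angle p y x := by
  unfold angle
  congr 1
  ext θ
  constructor
  · rintro ⟨x', h1, y', h2, h3, h4, rfl⟩
    exact ⟨y', h2, x', h1, h4, h3, ua_cangle_comm _ _ _⟩
  · rintro ⟨x', h1, y', h2, h3, h4, rfl⟩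
    exact ⟨y', h2, x', h1, h4, h3, ua_cangle_comm _ _ _⟩

theorem ua_angle_nonneg [MetricSpace X] (p x y : X) : 0 ≤ angle p x y := by
  apply Real.sInf_nonneg
  rintro _ ⟨_, _, _, _, _, _, rfl⟩
  exact arccos_nonneg _

/-- For two points of `[p,x]` the one closer to `p` lies between. -/
theorem ua_seg_nested [MetricSpace X] (hX : CAT0Space X) (p x x' : X) 
    (hx' : x' ∈ geodesicSegSet p x) (r : ℝ) (h0 : 0 ≤ r) (h1 : r ≤ dist p x') (u : X)
    (hu : dist p u = r) (hu2 : dist u x = dist p x - r) : u ∈ geodesicSegSet p x' := by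
  obtain ⟨v, hv, hv2⟩ := ua_exists_pt hX.1 p x' r h0 h1
  have e : dist p x' + dist x' x = dist p x := hx'
  have hn := dist_nonneg (x := x') (y := x)
  have tv : dist v x = dist p x - r := by
    have t1 := dist_triangle v x' x
    have t2 := dist_triangle p v x
    linarith
  have huv : u = v := by
    rcases eq_or_ne p x with rfl | hne
    · rw [dist_self] at *
      have a1 : dist p u = 0 := by linarith [dist_nonneg (x := p) (y := x')]
      have a2 : dist p v = 0 := by linarith [dist_nonneg (x := p) (y := x')]
      rw [← dist_eq_zero.1 a1, ← dist_eq_zero.1 a2]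
    · have hx0 : 0 < dist p x := dist_pos.2 hne
      have hr : r / dist p x * dist p x = r := by field_simp
      have := ua_cn_seg hX p x u v (r / dist p x) ⟨by positivity, by
        rw [div_le_one hx0]; linarith⟩ (by rw [hr, hu]) (by rw [hu2, sub_mul, hr, one_mul])
      rw [dist_comm v p, hv, tv] at this
      set s := r / dist p x
      have e3 : r = s * dist p x := hr.symm
      rw [e3] at this
      have h4 : dist v u ^ 2 ≤ 0 := by nlinarith
      exact (dist_eq_zero.1 (pow_eq_zero_iff (two_ne_zero) |>.1
        (le_antisymm h4 (sq_nonneg _)))).symm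
  rw [huv]
  show dist p v + dist v x' = dist p x'
  linarith

theorem ua_eucl (α β r : ℝ) (ha : 0 < α) (hb : 0 < β) (hab : α + β < π) (hr : 0 < r) :
    ∃ t, 0 < t ∧ t ≤ r ∧ ∀ u v w : ℝ, 0 ≤ u → 0 ≤ v → 0 ≤ w → w ≤ u + v →
      u ^ 2 ≤ r ^ 2 + t ^ 2 - 2 * r * t * cos α →
      v ^ 2 ≤ t ^ 2 + r ^ 2 - 2 * t * r * cos β →
      w ^ 2 ≤ r ^ 2 + r ^ 2 - 2 * r * r * cos (α + β) := by
  have hsa : 0 < sin α := sin_pos_of_pos_of_lt_pi ha (by linarith)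
  have hsb : 0 < sin β := sin_pos_of_pos_of_lt_pi hb (by linarith)
  have hsab : 0 < sin (α + β) := sin_pos_of_pos_of_lt_pi (by linarith) hab
  have h1 := sin_sq_add_cos_sq α
  have h2 := sin_sq_add_cos_sq β
  have hca := cos_le_one α
  have hcb := cos_le_one β
  rw [sin_add] at hsab
  rw [cos_add]
  set a := sin α
  set b := sin β
  set c := cos α
  set d := cos β
  refine ⟨r * (a * d + c * b) / (a + b), by positivity, ?_, ?_⟩
  · rw [div_le_iff₀ (by positivity)]
    apply mul_le_mul_of_nonneg_left _ hr.le
    nlinarith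
  · intro u v w hu hv hw hle hu2 hv2
    set t := r * (a * d + c * b) / (a + b) with ht
    have hta : t * (a + b) = r * (a * d + c * b) := by rw [ht]; field_simp
    set Q := r ^ 2 + r ^ 2 - 2 * r * r * (c * d - a * b) with hQ
    have k1 : (u * (a + b)) ^ 2 ≤ a ^ 2 * Q := by
      have : (r ^ 2 + t ^ 2 - 2 * r * t * c) * (a + b) ^ 2 = a ^ 2 * Q := by
        have : (r ^ 2 + t ^ 2 - 2 * r * t * c) * (a + b) ^ 2 =
          r ^ 2 * (a + b) ^ 2 + (t * (a + b)) ^ 2 - 2 * r * (t * (a + b)) * (a + b) * c := by ring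
        rw [this, hta, hQ]
        linear_combination r ^ 2 * (-(a + b) ^ 2 * h1 + a ^ 2 * (h1 + h2))
      rw [mul_pow, ← this]
      exact mul_le_mul_of_nonneg_right hu2 (sq_nonneg _)
    have k2 : (v * (a + b)) ^ 2 ≤ b ^ 2 * Q := by
      have : (t ^ 2 + r ^ 2 - 2 * t * r * d) * (a + b) ^ 2 = b ^ 2 * Q := by
        have : (t ^ 2 + r ^ 2 - 2 * t * r * d) * (a + b) ^ 2 =
          r ^ 2 * (a + b) ^ 2 + (t * (a + b)) ^ 2 - 2 * r * (t * (a + b)) * (a + b) * d := by ring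
        rw [this, hta, hQ]
        linear_combination r ^ 2 * (-(a + b) ^ 2 * h2 + b ^ 2 * (h1 + h2))
      rw [mul_pow, ← this]
      exact mul_le_mul_of_nonneg_right hv2 (sq_nonneg _)
    have hQ0 : 0 ≤ Q := by
      have : 0 ≤ a ^ 2 * Q := le_trans (sq_nonneg _) k1
      exact nonneg_of_mul_nonneg_right this (by positivity)
    have hq := Real.sq_sqrt hQ0
    have hq0 := Real.sqrt_nonneg Q
    set q := √Q
    rw [← hq, ← mul_pow] at k1 k2
    have k1' := abs_le_of_sq_le_sq' k1 (by positivity) |>.2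
    have k2' := abs_le_of_sq_le_sq' k2 (by positivity) |>.2
    have : u + v ≤ q := by
      have : (u + v) * (a + b) ≤ q * (a + b) := by linarith
      exact le_of_mul_le_mul_right this (by positivity)
    rw [← hq]
    exact pow_le_pow_left₀ hw (hle.trans this) 2

theorem ua_angle_triangle [MetricSpace X] (hX : CAT0Space X) (p x y z : X) (hx : x ≠ p)
    (hy : y ≠ p) (hz : z ≠ p) : angle p x z ≤ angle p x y + angle p y z := by
  by_contra! hcon
  set c := angle p x z with hc
  set δ := (c - (angle p x y + angle p y z)) / 3 with hδ
  have hδ0 : 0 < δ := by linarith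
  set α := angle p x y + δ with hα
  set β := angle p y z + δ with hβ
  have hα0 : 0 < α := by linarith [ua_angle_nonneg p x y]
  have hβ0 : 0 < β := by linarith [ua_angle_nonneg p y z]
  have hcpi : c ≤ π := (ua_angle_le_cangle p x z hx hz).trans (arccos_le_pi _)
  have hαβ : α + β < c := by linarith
  obtain ⟨x1, hx1, y1, hy1, hx1p, hy1p, h1⟩ := ua_exists_lt p x y hx hy α (by linarith)
  obtain ⟨y2, hy2, z2, hz2, hy2p, hz2p, h2⟩ := ua_exists_lt p y z hy hz β (by linarith)
  have px1 : 0 < dist p x1 := dist_pos.2 hx1p.symm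
  have py1 : 0 < dist p y1 := dist_pos.2 hy1p.symm
  have py2 : 0 < dist p y2 := dist_pos.2 hy2p.symm
  have pz2 : 0 < dist p z2 := dist_pos.2 hz2p.symm
  obtain ⟨r, hr0, hr1, hr2, hr3, hr4⟩ : ∃ r, 0 < r ∧ r ≤ dist p x1 ∧ r ≤ dist p y1 ∧
      r ≤ dist p y2 ∧ r ≤ dist p z2 :=
    ⟨min (min (dist p x1) (dist p y1)) (min (dist p y2) (dist p z2)), by positivity,
      by simp, by simp, by simp, by simp⟩
  obtain ⟨t, ht0, htr, H⟩ := ua_eucl α β r hα0 hβ0 (by linarith) hr0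
  have le_of_mem : ∀ q q' : X, q' ∈ geodesicSegSet p q → dist p q' ≤ dist p q := by
    intro q q' h
    have : dist p q' + dist q' q = dist p q := h
    linarith [dist_nonneg (x := q') (y := q)]
  have key : ∀ q q' : X, ∀ ρ, 0 < ρ → dist p q' = ρ → q' ≠ p := by
    rintro q q' ρ h0 h1 rfl
    rw [dist_self] at h1
    linarith
  obtain ⟨xr, hxr, hxr'⟩ := ua_exists_pt hX.1 p x r hr0.le (hr1.trans (le_of_mem _ _ hx1))
  obtain ⟨yt, hyt, hyt'⟩ := ua_exists_pt hX.1 p y t ht0.le (htr.trans (hr2.trans (le_of_mem _ _ hy1)))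
  obtain ⟨zr, hzr, hzr'⟩ := ua_exists_pt hX.1 p z r hr0.le (hr4.trans (le_of_mem _ _ hz2))
  have nx := key x xr r hr0 hxr
  have ny := key y yt t ht0 hyt
  have nz := key z zr r hr0 hzr
  have m1 := ua_seg_nested hX p x x1 hx1 r hr0.le hr1 xr hxr hxr'
  have m2 := ua_seg_nested hX p y y1 hy1 t ht0.le (htr.trans hr2) yt hyt hyt'
  have m3 := ua_seg_nested hX p y y2 hy2 t ht0.le (htr.trans hr3) yt hyt hyt'
  have m4 := ua_seg_nested hX p z z2 hz2 r hr0.le hr4 zr hzr hzr'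
  have c1 := (ua_cangle_mono hX p x1 y1 xr yt m1 nx m2 ny).trans h1.le
  have c2 := (ua_cangle_mono hX p y2 z2 yt zr m3 ny m4 nz).trans h2.le
  have d1 := ua_dist_le p xr yt nx ny α (by linarith) c1
  have d2 := ua_dist_le p yt zr ny nz β (by linarith) c2
  rw [hxr, hyt] at d1
  rw [hzr, hyt] at d2
  have d3 := H _ _ (dist xr zr) dist_nonneg dist_nonneg dist_nonneg (dist_triangle xr yt zr) d1 d2
  have c3 := ua_cangle_le p xr zr nx nz (α + β) (by linarith) (by linarith) (by
    rw [hxr, hzr]; exact d3)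
  have c4 := ua_angle_le p x z xr zr (show dist p xr + dist xr x = dist p x by linarith) nx
    (show dist p zr + dist zr z = dist p z by linarith) nz
  linarith

theorem ua_angle_pi [MetricSpace X] (p x y : X) (hx : x ≠ p) (hy : y ≠ p)
    (h : dist x p + dist p y = dist x y) : angle p x y = π := by
  have : {θ : ℝ | ∃ x' ∈ geodesicSegSet p x, ∃ y' ∈ geodesicSegSet p y,
      x' ≠ p ∧ y' ≠ p ∧ θ = cangle p x' y'} = {π} := by
    have main : ∀ x' ∈ geodesicSegSet p x, ∀ y' ∈ geodesicSegSet p y, x' ≠ p → y' ≠ p →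
        cangle p x' y' = π := by
      intro x' hx' y' hy' nx ny
      have hx0 : 0 < dist p x' := dist_pos.2 nx.symm
      have hy0 : 0 < dist p y' := dist_pos.2 ny.symm
      have e1 : dist p x' + dist x' x = dist p x := hx'
      have e2 : dist p y' + dist y' y = dist p y := hy'
      have t1 := dist_triangle4 x x' y' y
      have t2 := dist_triangle_left x' y' p
      rw [dist_comm x p] at h
      rw [dist_comm x x'] at t1
      have e3 : dist x' y' = dist p x' + dist p y' := by linarith
      unfold cangle
      rw [e3, arccos_eq_pi, div_le_iff₀ (by positivity)]
      nlinarith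
    ext θ
    constructor
    · rintro ⟨x', h1, y', h2, h3, h4, rfl⟩
      exact main x' h1 y' h2 h3 h4
    · rintro rfl
      exact ⟨x, ua_right_mem _ _, y, ua_right_mem _ _, hx, hy,
        (main x (ua_right_mem _ _) y (ua_right_mem _ _) hx hy).symm⟩
  unfold angle
  rw [this, csInf_singleton]

theorem ua_cangle_add [MetricSpace X] (p x z : X) (h1 : x ≠ p) (h2 : z ≠ p) (h3 : z ≠ x) :
    cangle p x z + cangle x p z ≤ π := by
  have hc : 0 < dist p x := dist_pos.2 h1.symm
  have hb : 0 < dist p z := dist_pos.2 h2.symm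
  have ha : 0 < dist x z := dist_pos.2 h3.symm
  have t1 := dist_triangle p x z
  have t2 := dist_triangle_left x z p
  unfold cangle
  rw [dist_comm x p]
  set a := dist x z
  set b := dist p z
  set c := dist p x
  rw [← le_sub_iff_add_le, ← arccos_neg]
  apply arccos_le_arccos
  rw [neg_le_iff_add_nonneg, div_add_div _ _ (by positivity) (by positivity)]
  apply div_nonneg _ (by positivity)
  have : 0 ≤ 2 * c * ((a + b) * ((c - (a - b)) * (c + (a - b)))) := by
    have : 0 ≤ c - (a - b) := by linarith
    have : 0 ≤ c + (a - b) := by linarith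
    positivity
  nlinarith

theorem ua_mk_eq {Xs : ℕ → Type*} [∀ n, MetricSpace (Xs n)]
    {ω : Ultrafilter ℕ} {b : ∀ n, Xs n}
    {hl : ∀ᶠ n in (ω : Filter ℕ), 0 < (fun _ : ℕ => (1:ℝ)) n}
    (u v : BddSeq Xs ω b (fun _ => (1:ℝ)))
    (h : Tendsto (fun n => dist (u.seq n) (v.seq n)) (ω : Filter ℕ) (nhds 0)) :
    Quotient.mk (ulimSetoid Xs ω b (fun _ => (1:ℝ)) hl) u =
      Quotient.mk (ulimSetoid Xs ω b (fun _ => (1:ℝ)) hl) v := by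
  apply Quotient.sound
  intro ε hε
  filter_upwards [h.eventually (gt_mem_nhds hε)] with n hn
  linarith

theorem ua_tendsto_zero {Xs : ℕ → Type*} [∀ n, MetricSpace (Xs n)]
    {ω : Ultrafilter ℕ} {b : ∀ n, Xs n}
    {hl : ∀ᶠ n in (ω : Filter ℕ), 0 < (fun _ : ℕ => (1:ℝ)) n}
    (u v : BddSeq Xs ω b (fun _ => (1:ℝ)))
    (h : Quotient.mk (ulimSetoid Xs ω b (fun _ => (1:ℝ)) hl) u =
      Quotient.mk (ulimSetoid Xs ω b (fun _ => (1:ℝ)) hl) v) :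
    Tendsto (fun n => dist (u.seq n) (v.seq n)) (ω : Filter ℕ) (nhds 0) := by
  have h' : ∀ ε : ℝ, 0 < ε → ∀ᶠ n in (ω : Filter ℕ), dist (u.seq n) (v.seq n) ≤ ε * 1 :=
    Quotient.exact h
  rw [Metric.tendsto_nhds]
  intro ε hε
  filter_upwards [h' (ε / 2) (by linarith)] with n hn
  rw [Real.dist_eq, sub_zero, abs_of_nonneg dist_nonneg]
  linarith

theorem ua_tendsto_dist {Xs : ℕ → Type*} [∀ n, MetricSpace (Xs n)]
    {ω : Ultrafilter ℕ} {b : ∀ n, Xs n}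
    {hl : ∀ᶠ n in (ω : Filter ℕ), 0 < (fun _ : ℕ => (1:ℝ)) n}
    {u v : BddSeq Xs ω b (fun _ => (1:ℝ))} {x y : Ultralimit Xs ω b (fun _ => (1:ℝ)) hl}
    (hu : Quotient.mk (ulimSetoid Xs ω b (fun _ => (1:ℝ)) hl) u = x)
    (hv : Quotient.mk (ulimSetoid Xs ω b (fun _ => (1:ℝ)) hl) v = y) :
    Tendsto (fun n => dist (u.seq n) (v.seq n)) (ω : Filter ℕ) (nhds (dist x y)) := by
  have h1 : Tendsto (fun n => dist (x.out.seq n) (y.out.seq n) / 1) (ω : Filter ℕ)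
      (nhds (dist x y)) := ulimDist_tendsto x y
  simp only [div_one] at h1
  have h2 := ua_tendsto_zero u x.out (hu.trans (Quotient.out_eq x).symm)
  have h3 := ua_tendsto_zero v y.out (hv.trans (Quotient.out_eq y).symm)
  have h4 := h2.add h3
  rw [add_zero] at h4
  refine tendsto_of_tendsto_of_dist h1 (squeeze_zero (fun _ => dist_nonneg) (fun n => ?_) h4)
  rw [dist_comm (dist _ _)]
  exact dist_dist_dist_le _ _ _ _

/-- Extend a bounded sequence by a nearby one. -/
def uaSeq {Xs : ℕ → Type*} [∀ n, MetricSpace (Xs n)]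
    {ω : Ultrafilter ℕ} {b : ∀ n, Xs n} (u : BddSeq Xs ω b (fun _ => (1:ℝ))) (w : ∀ n, Xs n)
    (h : ∃ C : ℝ, ∀ᶠ n in (ω : Filter ℕ), dist (w n) (u.seq n) ≤ C) :
    BddSeq Xs ω b (fun _ => (1:ℝ)) where
  seq := w
  bdd := by
    obtain ⟨C, hC⟩ := h
    obtain ⟨D, hD⟩ := u.bdd
    refine ⟨C + D, ?_⟩
    filter_upwards [hC, hD] with n h1 h2
    have := dist_triangle (w n) (u.seq n) (b n)
    linarith

theorem ua_tendsto_cangle {Xs : ℕ → Type*} [∀ n, MetricSpace (Xs n)]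
    {ω : Ultrafilter ℕ} {b : ∀ n, Xs n}
    {hl : ∀ᶠ n in (ω : Filter ℕ), 0 < (fun _ : ℕ => (1:ℝ)) n}
    {u v w : BddSeq Xs ω b (fun _ => (1:ℝ))} {x y z : Ultralimit Xs ω b (fun _ => (1:ℝ)) hl}
    (hu : Quotient.mk (ulimSetoid Xs ω b (fun _ => (1:ℝ)) hl) u = x)
    (hv : Quotient.mk (ulimSetoid Xs ω b (fun _ => (1:ℝ)) hl) v = y)
    (hw : Quotient.mk (ulimSetoid Xs ω b (fun _ => (1:ℝ)) hl) w = z)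
    (hxy : x ≠ y) (hxz : x ≠ z) :
    Tendsto (fun n => cangle (u.seq n) (v.seq n) (w.seq n)) (ω : Filter ℕ)
      (nhds (cangle x y z)) := by
  have h1 := ua_tendsto_dist hu hv
  have h2 := ua_tendsto_dist hu hw
  have h3 := ua_tendsto_dist hv hw
  have hd1 := dist_pos.2 hxy
  have hd2 := dist_pos.2 hxz
  unfold cangle
  apply Tendsto.arccos
  exact (((h1.pow 2).add (h2.pow 2)).sub (h3.pow 2)).div ((h1.const_mul 2).mul h2) (by positivity)

theorem ua_eventually_ne {Xs : ℕ → Type*} [∀ n, MetricSpace (Xs n)]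
    {ω : Ultrafilter ℕ} {b : ∀ n, Xs n}
    {hl : ∀ᶠ n in (ω : Filter ℕ), 0 < (fun _ : ℕ => (1:ℝ)) n}
    {u v : BddSeq Xs ω b (fun _ => (1:ℝ))} {x y : Ultralimit Xs ω b (fun _ => (1:ℝ)) hl}
    (hu : Quotient.mk (ulimSetoid Xs ω b (fun _ => (1:ℝ)) hl) u = x)
    (hv : Quotient.mk (ulimSetoid Xs ω b (fun _ => (1:ℝ)) hl) v = y)
    (hxy : x ≠ y) : ∀ᶠ n in (ω : Filter ℕ), u.seq n ≠ v.seq n := by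
  filter_upwards [(ua_tendsto_dist hu hv).eventually (lt_mem_nhds (dist_pos.2 hxy))] with n hn
  exact dist_pos.1 hn

/-- Points of a segment in the ultralimit are represented by points on segments. -/
theorem ua_lift_seg {Xs : ℕ → Type*} [∀ n, MetricSpace (Xs n)] (hcat : ∀ n, CAT0Space (Xs n))
    {ω : Ultrafilter ℕ} {b : ∀ n, Xs n}
    {hl : ∀ᶠ n in (ω : Filter ℕ), 0 < (fun _ : ℕ => (1:ℝ)) n}
    {u v : BddSeq Xs ω b (fun _ => (1:ℝ))} {x y : Ultralimit Xs ω b (fun _ => (1:ℝ)) hl}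
    (hu : Quotient.mk (ulimSetoid Xs ω b (fun _ => (1:ℝ)) hl) u = x)
    (hv : Quotient.mk (ulimSetoid Xs ω b (fun _ => (1:ℝ)) hl) v = y)
    (hxy : x ≠ y) (P : Ultralimit Xs ω b (fun _ => (1:ℝ)) hl) (hP : P ∈ geodesicSegSet x y) :
    ∃ w : BddSeq Xs ω b (fun _ => (1:ℝ)),
      Quotient.mk (ulimSetoid Xs ω b (fun _ => (1:ℝ)) hl) w = P ∧
      ∀ n, w.seq n ∈ geodesicSegSet (u.seq n) (v.seq n) := by
  have hd := dist_pos.2 hxy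
  have e : dist x P + dist P y = dist x y := hP
  set s := dist x P / dist x y with hs
  have e1 : dist x P = s * dist x y := by rw [hs]; field_simp
  have e2 : dist P y = (1 - s) * dist x y := by linarith
  have hs0 : 0 ≤ s := by positivity
  have hs1 : s ≤ 1 := by rw [hs, div_le_one hd]; linarith [dist_nonneg (x := P) (y := y)]
  have hex : ∀ n, ∃ m : Xs n, dist (u.seq n) m = s * dist (u.seq n) (v.seq n) ∧
      dist m (v.seq n) = (1 - s) * dist (u.seq n) (v.seq n) := by
    intro n
    obtain ⟨m, h1, h2⟩ := ua_exists_pt (hcat n).1 (u.seq n) (v.seq n)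
      (s * dist (u.seq n) (v.seq n)) (by positivity)
      (mul_le_of_le_one_left dist_nonneg hs1)
    exact ⟨m, h1, by rw [h2]; ring⟩
  choose m hm1 hm2 using hex
  have hPo : Quotient.mk (ulimSetoid Xs ω b (fun _ => (1:ℝ)) hl) P.out = P := Quotient.out_eq P
  have hlim : Tendsto (fun n => dist (m n) (P.out.seq n)) (ω : Filter ℕ) (nhds 0) := by
    have t1 := ua_tendsto_dist hPo hu
    have t2 := ua_tendsto_dist hPo hv
    have t3 := ua_tendsto_dist hu hv
    have t4 := (((t1.pow 2).const_mul (1 - s)).add ((t2.pow 2).const_mul s)).sub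
      ((t3.pow 2).const_mul (s * (1 - s)))
    have t5 : (1 - s) * dist P x ^ 2 + s * dist P y ^ 2 - s * (1 - s) * dist x y ^ 2 = 0 := by
      rw [dist_comm P x, e1, e2]; ring
    rw [t5] at t4
    have t6 : Tendsto (fun n => dist (m n) (P.out.seq n) ^ 2) (ω : Filter ℕ) (nhds 0) := by
      refine squeeze_zero (fun _ => sq_nonneg _) (fun n => ?_) t4
      rw [dist_comm (m n)]
      exact ua_cn_seg (hcat n) _ _ _ _ s ⟨hs0, hs1⟩ (hm1 n) (hm2 n)
    have t7 := t6.sqrt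
    simpa [Real.sqrt_sq] using t7
  refine ⟨uaSeq P.out m ⟨1, (hlim.eventually (gt_mem_nhds one_pos)).mono fun n hn => hn.le⟩, ?_, ?_⟩
  · exact (ua_mk_eq _ _ hlim).trans hPo
  · intro n
    show dist (u.seq n) (m n) + dist (m n) (v.seq n) = _
    rw [hm1, hm2]; ring

/-- Upper semicontinuity. -/
theorem ua_upper {Xs : ℕ → Type*} [∀ n, MetricSpace (Xs n)] (hcat : ∀ n, CAT0Space (Xs n))
    {ω : Ultrafilter ℕ} {b : ∀ n, Xs n}
    {hl : ∀ᶠ n in (ω : Filter ℕ), 0 < (fun _ : ℕ => (1:ℝ)) n}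
    {u v w : BddSeq Xs ω b (fun _ => (1:ℝ))} {x y z : Ultralimit Xs ω b (fun _ => (1:ℝ)) hl}
    (hu : Quotient.mk (ulimSetoid Xs ω b (fun _ => (1:ℝ)) hl) u = x)
    (hv : Quotient.mk (ulimSetoid Xs ω b (fun _ => (1:ℝ)) hl) v = y)
    (hw : Quotient.mk (ulimSetoid Xs ω b (fun _ => (1:ℝ)) hl) w = z)
    (hxy : x ≠ y) (hxz : x ≠ z) (c : ℝ) (hc : angle x y z < c) :
    ∀ᶠ n in (ω : Filter ℕ), angle (u.seq n) (v.seq n) (w.seq n) < c := by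
  obtain ⟨P, hP, Q, hQ, nP, nQ, hPQ⟩ := ua_exists_lt x y z hxy.symm hxz.symm c hc
  obtain ⟨p, hp, hps⟩ := ua_lift_seg hcat hu hv hxy P hP
  obtain ⟨q, hq, hqs⟩ := ua_lift_seg hcat hu hw hxz Q hQ
  filter_upwards [(ua_tendsto_cangle hu hp hq nP.symm nQ.symm).eventually (gt_mem_nhds hPQ),
    ua_eventually_ne hu hp nP.symm, ua_eventually_ne hu hq nQ.symm] with n h1 h2 h3
  exact (ua_angle_le _ _ _ _ _ (hps n) h2.symm (hqs n) h3.symm).trans_lt h1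

theorem ua_main
    (Xs : ℕ → Type*) [∀ n, MetricSpace (Xs n)] (hcat : ∀ n, CAT0Space (Xs n))
    (ω : Ultrafilter ℕ) (hω : IsNonprincipal ω) (b : ∀ n, Xs n)
    (hl : ∀ᶠ n in (ω : Filter ℕ), 0 < (fun _ : ℕ => (1:ℝ)) n)
    (x y z : Ultralimit Xs ω b (fun _ => (1:ℝ)) hl)
    (hxy : x ≠ y) (hxz : x ≠ z)
    (xk yk zk : BddSeq Xs ω b (fun _ => (1:ℝ)))
    (hx : Quotient.mk (ulimSetoid Xs ω b (fun _ => (1:ℝ)) hl) xk = x)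
    (hy : Quotient.mk (ulimSetoid Xs ω b (fun _ => (1:ℝ)) hl) yk = y)
    (hz : Quotient.mk (ulimSetoid Xs ω b (fun _ => (1:ℝ)) hl) zk = z) :
    ∃ xk' : BddSeq Xs ω b (fun _ => (1:ℝ)),
      Quotient.mk (ulimSetoid Xs ω b (fun _ => (1:ℝ)) hl) xk' = x ∧
      (∀ n, xk'.seq n ∈ geodesicSegSet (xk.seq n) (yk.seq n)) ∧
      ∀ yk' zk' : BddSeq Xs ω b (fun _ => (1:ℝ)),
        Quotient.mk (ulimSetoid Xs ω b (fun _ => (1:ℝ)) hl) yk' = y →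
        Quotient.mk (ulimSetoid Xs ω b (fun _ => (1:ℝ)) hl) zk' = z →
        limUnder (ω : Filter ℕ) (fun n => angle (xk'.seq n) (yk'.seq n) (zk'.seq n))
          = angle x y z := by
  set θ := angle x y z with hθ
  set t : ℕ → ℝ := fun j => 1 / ((j : ℝ) + 1) with ht
  have ht0 : ∀ j, 0 < t j := fun j => by simp only [ht]; positivity
  have hdxy := dist_pos.2 hxy
  have tend_xy := ua_tendsto_dist hx hy
  -- points at distance `t j` along the segments
  have hex : ∀ j n, ∃ m : Xs n, dist (xk.seq n) m = min (t j) (dist (xk.seq n) (yk.seq n)) ∧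
      dist m (yk.seq n) = dist (xk.seq n) (yk.seq n) - min (t j) (dist (xk.seq n) (yk.seq n)) :=
    fun j n => ua_exists_pt (hcat n).1 _ _ _ (le_min (ht0 j).le dist_nonneg) (min_le_right _ _)
  choose m hm1 hm2 using hex
  have hSj : ∀ j, ∀ᶠ n in (ω : Filter ℕ),
      θ - t j < cangle (xk.seq n) (m j n) (zk.seq n) := by
    intro j
    let p : BddSeq Xs ω b (fun _ => (1:ℝ)) := uaSeq xk (m j) ⟨t j, Eventually.of_forall fun n => by
      rw [dist_comm, hm1]; exact min_le_left _ _⟩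
    set P := Quotient.mk (ulimSetoid Xs ω b (fun _ => (1:ℝ)) hl) p with hP
    let P' : Ultralimit Xs ω b (fun _ => (1:ℝ)) hl := P
    have tmin : Tendsto (fun n => min (t j) (dist (xk.seq n) (yk.seq n))) (ω : Filter ℕ)
      (nhds (min (t j) (dist x y))) := tendsto_const_nhds.min tend_xy
    have d1 : dist x P' = min (t j) (dist x y) := by
      refine tendsto_nhds_unique (ua_tendsto_dist hx (v := p) rfl) ?_
      exact tmin.congr fun n => (hm1 j n).symm
    have d2 : dist P' y = dist x y - min (t j) (dist x y) := by
      refine tendsto_nhds_unique (ua_tendsto_dist (u := p) rfl hy) ?_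
      exact (tend_xy.sub tmin).congr fun n => (hm2 j n).symm
    have nP : x ≠ P' := by
      apply dist_pos.1
      rw [d1]
      exact lt_min (ht0 j) hdxy
    have hle : θ ≤ cangle x P' z := ua_angle_le x y z P' z
      (show dist x P' + dist P' y = dist x y by linarith) nP.symm (ua_right_mem _ _) hxz.symm
    exact (ua_tendsto_cangle hx (v := p) rfl hz nP hxz).eventually
      (lt_mem_nhds (by linarith [ht0 j]))
  -- diagonal choice
  classical
  let G : ℕ → ℕ → Prop := fun n j => j = 0 ∨ θ - t j < cangle (xk.seq n) (m j n) (zk.seq n)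
  let J : ℕ → ℕ := fun n => Nat.findGreatest (G n) n
  have hJG : ∀ n, G n (J n) := fun n => Nat.findGreatest_spec (m := 0) (Nat.zero_le _) (Or.inl rfl)
  have hcof : ∀ j, ∀ᶠ n in (ω : Filter ℕ), j ≤ n := by
    intro j
    by_contra hcon
    have h1 : {n | n < j} ∈ ω := by
      have := Ultrafilter.eventually_not.2 hcon
      filter_upwards [this] with n hn
      exact not_le.1 hn
    exact hω _ (Set.finite_lt_nat j) h1
  have hJ : ∀ j, ∀ᶠ n in (ω : Filter ℕ), j ≤ J n := by
    intro j
    filter_upwards [hcof j, hSj j] with n h1 h2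
    exact Nat.le_findGreatest h1 (Or.inr h2)
  have hJt : Tendsto J (ω : Filter ℕ) atTop := tendsto_atTop.2 hJ
  have htJ : Tendsto (fun n => t (J n)) (ω : Filter ℕ) (nhds 0) :=
    (tendsto_one_div_add_atTop_nhds_zero_nat (𝕜 := ℝ)).comp hJt
  have hlim : Tendsto (fun n => dist (m (J n) n) (xk.seq n)) (ω : Filter ℕ) (nhds 0) := by
    refine squeeze_zero (fun _ => dist_nonneg) (fun n => ?_) htJ
    rw [dist_comm, hm1]
    exact min_le_left _ _
  let xk' : BddSeq Xs ω b (fun _ => (1:ℝ)) := uaSeq xk (fun n => m (J n) n)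
    ⟨1, (hlim.eventually (gt_mem_nhds one_pos)).mono fun n hn => hn.le⟩
  have hx' : Quotient.mk (ulimSetoid Xs ω b (fun _ => (1:ℝ)) hl) xk' = x :=
    (ua_mk_eq _ _ hlim).trans hx
  refine ⟨xk', hx', ?_, ?_⟩
  · intro n
    show dist (xk.seq n) (m (J n) n) + dist (m (J n) n) (yk.seq n) = _
    rw [hm1, hm2]; ring
  intro yk' zk' hy' hz'
  apply Tendsto.limUnder_eq
  have hlow : ∀ᶠ n in (ω : Filter ℕ),
      θ - t (J n) - cangle (xk'.seq n) (yk.seq n) (yk'.seq n)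
        - cangle (xk'.seq n) (zk'.seq n) (zk.seq n) ≤
      angle (xk'.seq n) (yk'.seq n) (zk'.seq n) := by
    filter_upwards [hJ 1, ua_eventually_ne hx' hy hxy, ua_eventually_ne hx' hy' hxy,
      ua_eventually_ne hx' hz hxz, ua_eventually_ne hx' hz' hxz, ua_eventually_ne hx hy hxy,
      ua_eventually_ne hx hz hxz] with n h1 ny ny' nz nz' nxy nxz
    have hG : θ - t (J n) < cangle (xk.seq n) (xk'.seq n) (zk.seq n) := by
      rcases hJG n with h | h
      · omega
      · exact h
    have e1 : dist (xk.seq n) (xk'.seq n) = _ := hm1 (J n) n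
    have e2 : dist (xk'.seq n) (yk.seq n) = _ := hm2 (J n) n
    have nx : xk.seq n ≠ xk'.seq n := by
      apply dist_pos.1
      rw [e1]
      exact lt_min (ht0 _) (dist_pos.2 nxy)
    have a1 := ua_angle_pi (xk'.seq n) (xk.seq n) (yk.seq n) nx ny.symm (by linarith)
    have a2 := ua_angle_triangle (hcat n) (xk'.seq n) (xk.seq n) (zk.seq n) (yk.seq n) nx nz.symm
      ny.symm
    have a3 := ua_angle_le_cangle (xk'.seq n) (xk.seq n) (zk.seq n) nx nz.symm
    have a4 := ua_cangle_add (xk'.seq n) (xk.seq n) (zk.seq n) nx nz.symm nxz.symm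
    have b1 := ua_angle_triangle (hcat n) (xk'.seq n) (yk.seq n) (yk'.seq n) (zk.seq n) ny.symm
      ny'.symm nz.symm
    have b2 := ua_angle_triangle (hcat n) (xk'.seq n) (yk'.seq n) (zk'.seq n) (zk.seq n) ny'.symm
      nz'.symm nz.symm
    have b3 := ua_angle_le_cangle (xk'.seq n) (yk.seq n) (yk'.seq n) ny.symm ny'.symm
    have b4 := ua_angle_le_cangle (xk'.seq n) (zk'.seq n) (zk.seq n) nz'.symm nz.symm
    rw [ua_angle_comm _ (zk.seq n) (yk.seq n)] at a2
    linarith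
  have cself : ∀ q : Ultralimit Xs ω b (fun _ => (1:ℝ)) hl, x ≠ q → cangle x q q = 0 := by
    intro q hq
    have := dist_pos.2 hq
    unfold cangle
    rw [arccos_eq_zero, dist_self, le_div_iff₀ (by positivity)]
    nlinarith
  have l1 := ua_tendsto_cangle hx' hy hy' hxy hxy
  have l2 := ua_tendsto_cangle hx' hz' hz hxz hxz
  rw [cself y hxy] at l1
  rw [cself z hxz] at l2
  have l3 := ((htJ.const_sub θ).sub l1).sub l2
  simp only [sub_zero] at l3
  rw [tendsto_order]
  refine ⟨fun a ha => ?_, fun a ha => ua_upper hcat hx' hy' hz' hxy hxz a ha⟩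
  filter_upwards [hlow, l3.eventually (lt_mem_nhds ha)] with n h1 h2
  linarith

/-! ## STATEMENT 14: angles in ultralimits -/

/-- **Proposition.** Let `X = ω-lim (X_k, d_k, ⋆_k)` be an ultralimit of based CAT(0)
spaces and let `x, y, z ∈ X` with `x ≠ y`, `x ≠ z` be represented by `(x_k), (y_k),
(z_k)`.  Then there is a sequence `(x'_k)` representing `x` with `x'_k ∈ [x_k, y_k]` such
that for all sequences `(y'_k)`, `(z'_k)` representing `y` and `z`,
`ω-lim ∠_{x'_k}(y'_k, z'_k) = ∠_x(y,z)`. -/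
theorem ultralimit_angle
    (Xs : ℕ → Type*) [∀ n, MetricSpace (Xs n)] (hcat : ∀ n, CAT0Space (Xs n))
    (ω : Ultrafilter ℕ) (hω : IsNonprincipal ω) (b : ∀ n, Xs n)
    (hl : ∀ᶠ n in (ω : Filter ℕ), 0 < (fun _ : ℕ => (1:ℝ)) n)
    (x y z : Ultralimit Xs ω b (fun _ => (1:ℝ)) hl)
    (hxy : x ≠ y) (hxz : x ≠ z)
    (xk yk zk : BddSeq Xs ω b (fun _ => (1:ℝ)))
    (hx : Quotient.mk (ulimSetoid Xs ω b (fun _ => (1:ℝ)) hl) xk = x)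
    (hy : Quotient.mk (ulimSetoid Xs ω b (fun _ => (1:ℝ)) hl) yk = y)
    (hz : Quotient.mk (ulimSetoid Xs ω b (fun _ => (1:ℝ)) hl) zk = z) :
    ∃ xk' : BddSeq Xs ω b (fun _ => (1:ℝ)),
      Quotient.mk (ulimSetoid Xs ω b (fun _ => (1:ℝ)) hl) xk' = x ∧
      (∀ n, xk'.seq n ∈ geodesicSegSet (xk.seq n) (yk.seq n)) ∧
      ∀ yk' zk' : BddSeq Xs ω b (fun _ => (1:ℝ)),
        Quotient.mk (ulimSetoid Xs ω b (fun _ => (1:ℝ)) hl) yk' = y →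
        Quotient.mk (ulimSetoid Xs ω b (fun _ => (1:ℝ)) hl) zk' = z →
        limUnder (ω : Filter ℕ) (fun n => angle (xk'.seq n) (yk'.seq n) (zk'.seq n))
          = angle x y z := by
  exact ua_main Xs hcat ω hω b hl x y z hxy hxz xk yk zk hx hy hz
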